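/- arXiv:1104.2911 — 2 statements merged into one kernel-verified Lean document; each statement's English description precedes it below -/
import Mathlib

section
/- Let A be a compact infinite metric space carrying an upper α-regular measure μ with μ(A) > 0, let w be a bounded SLP weight on A, and let s > α. Then there exists a constant C₂ > 0, independent of N, such that every N-point (s,w)-energy minimizing configuration ω*_N on A satisfies δ(ω*_N) ≥ C₂ · N^{−1/α} for all N ≥ 2; consequently the N-point best-packing distance satisfies δ_N(A) ≥ C₂ · N^{−1/α} for all N ≥ 2. -/
open Metric MeasureTheory Filter
open scoped ENNReal NNReal

noncomputable section

variable {A : Type*} [MetricSpace A]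

/-- The separation distance `δ(ω_N)` of a configuration of `N` points. -/
def sepDist {N : ℕ} (x : Fin N → A) : ℝ :=
  sInf {d : ℝ | ∃ i j : Fin N, i ≠ j ∧ d = dist (x i) (x j)}

/-- The mesh norm (covering radius) `ρ(ω_N, K)` of a configuration with respect to `K`. -/
def meshNorm {N : ℕ} (x : Fin N → A) (K : Set A) : ℝ :=
  sSup {d : ℝ | ∃ y ∈ K, d = ⨅ i : Fin N, dist y (x i)}

/-- The weighted Riesz `(s,w)`-energy of a configuration. -/
def rieszEnergy {N : ℕ} (s : ℝ) (w : A → A → ℝ) (x : Fin N → A) : ℝ :=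
  ∑ i : Fin N, ∑ j : Fin N, if i = j then 0 else w (x i) (x j) / dist (x i) (x j) ^ s

/-- `x` is an `N`-point `(s,w)`-energy minimizing configuration on `K`. -/
def IsEnergyMinimizer {N : ℕ} (s : ℝ) (w : A → A → ℝ) (K : Set A) (x : Fin N → A) : Prop :=
  Function.Injective x ∧ (∀ i, x i ∈ K) ∧
    ∀ y : Fin N → A, Function.Injective y → (∀ i, y i ∈ K) →
      rieszEnergy s w x ≤ rieszEnergy s w y

/-- The `N`-point best-packing distance `δ_N(K)`. -/
def bestPackingDist (K : Set A) (N : ℕ) : ℝ :=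
  sSup {d : ℝ | ∃ x : Fin N → A, Function.Injective x ∧ (∀ i, x i ∈ K) ∧ d = sepDist x}

/-- The `N`-point mesh norm `ρ_N(K)`. -/
def meshNormN (K : Set A) (N : ℕ) : ℝ :=
  sInf {d : ℝ | ∃ x : Fin N → A, Function.Injective x ∧ (∀ i, x i ∈ K) ∧ d = meshNorm x K}

/-- The minimal `N`-point `(s,w)`-energy `𝓔_s^w(N,K)`. -/
def minEnergy (s : ℝ) (w : A → A → ℝ) (K : Set A) (N : ℕ) : ℝ :=
  sInf {E : ℝ | ∃ x : Fin N → A, Function.Injective x ∧ (∀ i, x i ∈ K) ∧ E = rieszEnergy s w x}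

/-- `μ` is upper `α`-regular with constant `C₀`. -/
def IsUpperRegular [MeasurableSpace A] (μ : Measure A) (α C₀ : ℝ) : Prop :=
  ∀ (x : A) (r : ℝ), 0 < r → r ≤ diam (Set.univ : Set A) →
    μ (closedBall x r) ≤ ENNReal.ofReal (C₀ * r ^ α)

/-- `μ` is lower `α`-regular with constant `c₀`. -/
def IsLowerRegular [MeasurableSpace A] (μ : Measure A) (α c₀ : ℝ) : Prop :=
  ∀ (x : A) (r : ℝ), 0 < r → r ≤ diam (Set.univ : Set A) →
    ENNReal.ofReal (c₀⁻¹ * r ^ α) ≤ μ (closedBall x r)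

/-- `w` is an SLP weight on `K`: symmetric, lower semi-continuous on `K × K`,
nonnegative, and positive on the diagonal. -/
def IsSLPWeight (w : A → A → ℝ) (K : Set A) : Prop :=
  (∀ x ∈ K, ∀ y ∈ K, 0 ≤ w x y) ∧
  (∀ x ∈ K, ∀ y ∈ K, w x y = w y x) ∧
  LowerSemicontinuousOn (fun p : A × A => w p.1 p.2) (K ×ˢ K) ∧
  (∀ x ∈ K, 0 < w x x)

lemma closedBall_diam_univ [CompactSpace A] (a : A) :
    closedBall a (diam (Set.univ : Set A)) = Set.univ :=
  Set.eq_univ_of_forall fun y =>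
    dist_le_diam_of_mem isCompact_univ.isBounded (Set.mem_univ y) (Set.mem_univ a)

lemma IsUpperRegular.pos_of_measure_univ_pos [CompactSpace A] [Nontrivial A] [MeasurableSpace A]
    {μ : Measure A} {α C₀ : ℝ} (hreg : IsUpperRegular μ α C₀) (hμ : 0 < μ Set.univ) :
    0 < C₀ := by
  obtain ⟨a⟩ : Nonempty A := inferInstance
  have hd : 0 < diam (Set.univ : Set A) :=
    diam_pos Set.nontrivial_univ isCompact_univ.isBounded
  have h := hreg a _ hd le_rfl
  rw [closedBall_diam_univ] at h
  have h' := ENNReal.ofReal_pos.mp (hμ.trans_le h)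
  exact pos_of_mul_pos_left h' (Real.rpow_nonneg hd.le _)

/-- Upper regularity extends to radii exceeding the diameter. -/
lemma IsUpperRegular.measure_closedBall_le [CompactSpace A] [Nontrivial A] [MeasurableSpace A]
    {μ : Measure A} {α C₀ : ℝ} (hreg : IsUpperRegular μ α C₀) (hα : 0 < α) (hC₀ : 0 ≤ C₀)
    (x : A) {r : ℝ} (hr : 0 < r) : μ (closedBall x r) ≤ ENNReal.ofReal (C₀ * r ^ α) := by
  have hd : 0 < diam (Set.univ : Set A) :=
    diam_pos Set.nontrivial_univ isCompact_univ.isBounded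
  rcases le_or_gt r (diam (Set.univ : Set A)) with h | h
  · exact hreg x r hr h
  · calc μ (closedBall x r) ≤ μ (closedBall x (diam (Set.univ : Set A))) :=
          measure_mono ((Set.subset_univ _).trans (closedBall_diam_univ x).ge)
      _ ≤ ENNReal.ofReal (C₀ * diam (Set.univ : Set A) ^ α) := hreg x _ hd le_rfl
      _ ≤ ENNReal.ofReal (C₀ * r ^ α) := by gcongr

/-- The complement of at most `N` small balls keeps half of the total mass. -/
lemma half_measure_le_measure_compl_balls [MeasurableSpace A] [BorelSpace A] {ι : Type*}
    {μ : Measure A} [IsFiniteMeasure μ] {N : ℕ} {v : ℝ} (hv : 0 ≤ v)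
    (hvN : N * v ≤ μ.real Set.univ / 2) (J : Finset ι) (hJ : J.card ≤ N) (x : ι → A) {r : ℝ}
    (hball : ∀ y, μ (closedBall y r) ≤ ENNReal.ofReal v) :
    ENNReal.ofReal (μ.real Set.univ / 2) ≤ μ (⋃ j ∈ J, closedBall (x j) r)ᶜ := by
  have hU : MeasurableSet (⋃ j ∈ J, closedBall (x j) r) :=
    Finset.measurableSet_biUnion J fun j _ => measurableSet_closedBall
  have hle : μ.real (⋃ j ∈ J, closedBall (x j) r) ≤ μ.real Set.univ / 2 := by
    calc μ.real (⋃ j ∈ J, closedBall (x j) r) ≤ ∑ j ∈ J, μ.real (closedBall (x j) r) :=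
          measureReal_biUnion_finset_le J _
      _ ≤ ∑ _j ∈ J, v := Finset.sum_le_sum fun j _ =>
          ENNReal.toReal_le_of_le_ofReal hv (hball (x j))
      _ = J.card * v := by simp
      _ ≤ N * v := by gcongr
      _ ≤ _ := hvN
  rw [← ofReal_measureReal, measureReal_compl hU]
  exact ENNReal.ofReal_le_ofReal (by linarith)

/-- Dyadic majorant of the kernel `dist ^ (-s)` away from its pole. -/
lemma ofReal_dist_rpow_neg_le_tsum {s r : ℝ} (hs : 0 ≤ s) (hr : 0 < r) {x z : A}
    (hz : r ≤ dist z x) :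
    ENNReal.ofReal (dist z x ^ (-s)) ≤
      ∑' k : ℕ, (closedBall x (2 ^ (k + 1) * r)).indicator
        (fun _ => ENNReal.ofReal ((2 ^ k * r) ^ (-s))) z := by
  obtain ⟨k, hk, hk'⟩ := exists_nat_pow_near ((one_le_div hr).mpr hz) (one_lt_two (α := ℝ))
  rw [le_div_iff₀ hr] at hk
  rw [div_lt_iff₀ hr] at hk'
  refine le_trans ?_ (ENNReal.le_tsum k)
  rw [Set.indicator_of_mem (mem_closedBall.mpr hk'.le)]
  exact ENNReal.ofReal_le_ofReal
    (Real.rpow_le_rpow_of_nonpos (by positivity) hk (neg_nonpos.mpr hs))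

/-- Riesz potentials with `s > α` are bounded by `r ^ (α - s)` off a ball of radius `r`. -/
lemma lintegral_dist_rpow_neg_le [MeasurableSpace A] [BorelSpace A] {μ : Measure A}
    {α C₀ s r : ℝ} (hα : 0 < α) (hs : α < s) (hC₀ : 0 ≤ C₀) (hr : 0 < r)
    (hball : ∀ y : A, ∀ t : ℝ, 0 < t → μ (closedBall y t) ≤ ENNReal.ofReal (C₀ * t ^ α))
    (x : A) {D : Set A} (hD : MeasurableSet D) (hDx : ∀ z ∈ D, r ≤ dist z x) :
    ∫⁻ z in D, ENNReal.ofReal (dist z x ^ (-s)) ∂μ ≤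
      ENNReal.ofReal (C₀ * r ^ α * (2 ^ α * (1 - 2 ^ (α - s))⁻¹ * r ^ (-s))) := by
  have hq0 : (0 : ℝ) ≤ 2 ^ (α - s) := by positivity
  have hq1 : (2 : ℝ) ^ (α - s) < 1 :=
    Real.rpow_lt_one_of_one_lt_of_neg one_lt_two (by linarith)
  have hterm (k : ℕ) : (2 ^ k * r) ^ (-s) * (C₀ * (2 ^ (k + 1) * r) ^ α) =
      C₀ * r ^ α * (2 ^ α * r ^ (-s)) * ((2 : ℝ) ^ (α - s)) ^ k := by
    rw [Real.mul_rpow (by positivity) hr.le, Real.mul_rpow (by positivity) hr.le, pow_succ,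
      Real.mul_rpow (by positivity) (by positivity), sub_eq_add_neg,
      Real.rpow_add two_pos, mul_pow, ← Real.rpow_pow_comm two_pos.le,
      ← Real.rpow_pow_comm two_pos.le]
    ring
  calc ∫⁻ z in D, ENNReal.ofReal (dist z x ^ (-s)) ∂μ
      ≤ ∫⁻ z in D, ∑' k : ℕ, (closedBall x (2 ^ (k + 1) * r)).indicator
          (fun _ => ENNReal.ofReal ((2 ^ k * r) ^ (-s))) z ∂μ :=
        setLIntegral_mono' hD fun z hz =>
          ofReal_dist_rpow_neg_le_tsum (hα.trans hs).le hr (hDx z hz)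
    _ ≤ ∫⁻ z, ∑' k : ℕ, (closedBall x (2 ^ (k + 1) * r)).indicator
          (fun _ => ENNReal.ofReal ((2 ^ k * r) ^ (-s))) z ∂μ := setLIntegral_le_lintegral _ _
    _ = ∑' k : ℕ, ENNReal.ofReal ((2 ^ k * r) ^ (-s)) * μ (closedBall x (2 ^ (k + 1) * r)) := by
        rw [lintegral_tsum fun k =>
          (measurable_const.indicator measurableSet_closedBall).aemeasurable]
        simp_rw [lintegral_indicator_const measurableSet_closedBall]
    _ ≤ ∑' k : ℕ, ENNReal.ofReal (C₀ * r ^ α * (2 ^ α * r ^ (-s)) * (2 ^ (α - s)) ^ k) := by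
        refine ENNReal.tsum_le_tsum fun k => ?_
        rw [← hterm, ENNReal.ofReal_mul (by positivity)]
        gcongr
        exact hball x _ (by positivity)
    _ = _ := by
        rw [← ENNReal.ofReal_tsum_of_nonneg (fun k => by positivity)
          ((summable_geometric_of_lt_one hq0 hq1).mul_left _), tsum_mul_left,
          tsum_geometric_of_lt_one hq0 hq1]
        congr 1
        ring

/-- A level that the potential of at most `N` points exceeds everywhere off the `r`-balls around
them is at most of order `r ^ (-s)`, provided `N * r ^ α` is comparable to the total mass. -/
lemma le_of_forall_le_potential [MeasurableSpace A] [BorelSpace A] {ι : Type*}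
    {μ : Measure A} [IsFiniteMeasure μ] (hμ : 0 < μ.real Set.univ)
    {α C₀ s r M u : ℝ} {N : ℕ} (hα : 0 < α) (hs : α < s) (hC₀ : 0 ≤ C₀) (hr : 0 < r)
    (hM : 0 ≤ M) (hu : 0 ≤ u)
    (hball : ∀ y : A, ∀ t : ℝ, 0 < t → μ (closedBall y t) ≤ ENNReal.ofReal (C₀ * t ^ α))
    (hrN : N * (C₀ * r ^ α) ≤ μ.real Set.univ / 2) (J : Finset ι) (hJ : J.card ≤ N) (x : ι → A)
    (hpot : ∀ z, (∀ j ∈ J, r < dist z (x j)) → u ≤ ∑ j ∈ J, M * dist z (x j) ^ (-s)) :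
    u ≤ M * (2 ^ α * (1 - 2 ^ (α - s))⁻¹ * r ^ (-s)) := by
  have hq1 : (2 : ℝ) ^ (α - s) < 1 :=
    Real.rpow_lt_one_of_one_lt_of_neg one_lt_two (by linarith)
  have hq : 0 < (1 - (2 : ℝ) ^ (α - s))⁻¹ := inv_pos.mpr (by linarith)
  set B : ℝ := 2 ^ α * (1 - 2 ^ (α - s))⁻¹ * r ^ (-s) with hB
  have hB0 : 0 ≤ B := by positivity
  set D : Set A := (⋃ j ∈ J, closedBall (x j) r)ᶜ with hDdef
  have hD : MeasurableSet D :=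
    (Finset.measurableSet_biUnion J fun j _ => measurableSet_closedBall).compl
  have hmem {z : A} (hz : z ∈ D) : ∀ j ∈ J, r < dist z (x j) := by
    simpa [hDdef] using hz
  have hmass := half_measure_le_measure_compl_balls (v := C₀ * r ^ α) (by positivity) hrN J hJ x
    (r := r) fun y => hball y r hr
  have key : ENNReal.ofReal (u * (μ.real Set.univ / 2)) ≤
      ENNReal.ofReal (N * (M * (C₀ * r ^ α * B))) := by
    calc ENNReal.ofReal (u * (μ.real Set.univ / 2))
        = ENNReal.ofReal u * ENNReal.ofReal (μ.real Set.univ / 2) := ENNReal.ofReal_mul hu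
      _ ≤ ENNReal.ofReal u * μ D := by gcongr
      _ = ∫⁻ _z in D, ENNReal.ofReal u ∂μ := (setLIntegral_const _ _).symm
      _ ≤ ∫⁻ z in D, ∑ j ∈ J, ENNReal.ofReal M * ENNReal.ofReal (dist z (x j) ^ (-s)) ∂μ := by
          refine setLIntegral_mono' hD fun z hz => ?_
          refine (ENNReal.ofReal_le_ofReal (hpot z (hmem hz))).trans_eq ?_
          rw [ENNReal.ofReal_sum_of_nonneg fun j _ => by positivity]
          simp_rw [ENNReal.ofReal_mul hM]
      _ = ∑ j ∈ J, ENNReal.ofReal M * ∫⁻ z in D, ENNReal.ofReal (dist z (x j) ^ (-s)) ∂μ := by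
          rw [lintegral_finsetSum' _ fun j _ => by fun_prop]
          exact Finset.sum_congr rfl fun j _ => lintegral_const_mul _ (by fun_prop)
      _ ≤ ∑ _j ∈ J, ENNReal.ofReal (M * (C₀ * r ^ α * B)) := by
          refine Finset.sum_le_sum fun j hj => ?_
          rw [ENNReal.ofReal_mul hM]
          gcongr
          exact lintegral_dist_rpow_neg_le hα hs hC₀ hr hball (x j) hD
            fun z hz => (hmem hz j hj).le
      _ = ENNReal.ofReal (J.card * (M * (C₀ * r ^ α * B))) := by
          rw [Finset.sum_const, nsmul_eq_mul, ENNReal.ofReal_mul (Nat.cast_nonneg _),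
            ENNReal.ofReal_natCast]
      _ ≤ _ := by gcongr
  rw [ENNReal.ofReal_le_ofReal_iff (by positivity)] at key
  have h2 : N * (M * (C₀ * r ^ α * B)) ≤ M * B * (μ.real Set.univ / 2) := by
    calc N * (M * (C₀ * r ^ α * B)) = M * B * (N * (C₀ * r ^ α)) := by ring
      _ ≤ _ := by gcongr
  exact le_of_mul_le_mul_right (key.trans h2) (by positivity)

/-- On a compact space an SLP weight is bounded below near the diagonal. -/
lemma IsSLPWeight.exists_lower_bound_near_diagonal [CompactSpace A] [Nonempty A]
    {w : A → A → ℝ} (hw : IsSLPWeight w Set.univ) :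
    ∃ c > 0, ∃ η > 0, ∀ x y : A, dist x y < η → c < w x y := by
  obtain ⟨-, -, hlsc, hpos⟩ := hw
  rw [Set.univ_prod_univ, lowerSemicontinuousOn_univ_iff] at hlsc
  have hdiag : LowerSemicontinuous fun x : A => w x x :=
    hlsc.comp (continuous_id.prodMk continuous_id)
  obtain ⟨a, -, ha⟩ := (hdiag.lowerSemicontinuousOn Set.univ).exists_isMinOn
    Set.univ_nonempty isCompact_univ
  refine ⟨w a a / 2, half_pos (hpos a trivial), ?_⟩
  have hU : {p : A × A | w a a / 2 < w p.1 p.2} ∈ uniformity A := by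
    rw [← nhdsSet_diagonal_eq_uniformity]
    refine (hlsc.isOpen_preimage (w a a / 2)).mem_nhdsSet.mpr ?_
    rintro ⟨x, y⟩ (rfl : x = y)
    exact (half_lt_self (hpos a trivial)).trans_le (ha (Set.mem_univ x))
  obtain ⟨η, hη, h⟩ := mem_uniformity_dist.mp hU
  exact ⟨η, hη, fun x y hxy => h hxy⟩

/-- The energy splits into the part not involving the `i`-th point and twice its potential. -/
lemma rieszEnergy_eq_add_potential {N : ℕ} {s : ℝ} {w : A → A → ℝ} (hw : ∀ a b, w a b = w b a)
    (x : Fin N → A) (i : Fin N) :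
    rieszEnergy s w x =
      (∑ a ∈ Finset.univ.erase i, ∑ b ∈ Finset.univ.erase i,
        if a = b then 0 else w (x a) (x b) / dist (x a) (x b) ^ s) +
      2 * ∑ b ∈ Finset.univ.erase i, w (x i) (x b) / dist (x i) (x b) ^ s := by
  have hi : i ∈ (Finset.univ : Finset (Fin N)) := Finset.mem_univ i
  have hrow : (∑ b ∈ Finset.univ.erase i,
      if i = b then 0 else w (x i) (x b) / dist (x i) (x b) ^ s) =
      ∑ b ∈ Finset.univ.erase i, w (x i) (x b) / dist (x i) (x b) ^ s :=
    Finset.sum_congr rfl fun b hb => if_neg (Finset.ne_of_mem_erase hb).symm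
  have hcol : (∑ a ∈ Finset.univ.erase i,
      if a = i then 0 else w (x a) (x i) / dist (x a) (x i) ^ s) =
      ∑ b ∈ Finset.univ.erase i, w (x i) (x b) / dist (x i) (x b) ^ s :=
    Finset.sum_congr rfl fun b hb => by
      rw [if_neg (Finset.ne_of_mem_erase hb), hw, dist_comm]
  have hsplit (a : Fin N) := Finset.add_sum_erase Finset.univ
    (fun b => if a = b then 0 else w (x a) (x b) / dist (x a) (x b) ^ s) hi
  rw [rieszEnergy, ← Finset.add_sum_erase _ _ hi]
  simp_rw [← hsplit]
  rw [Finset.sum_add_distrib, hrow, hcol, if_pos trivial]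
  ring

/-- Moving one point of a minimizing configuration does not decrease its potential. -/
lemma IsEnergyMinimizer.potential_le {N : ℕ} {s : ℝ} {w : A → A → ℝ}
    (hw : ∀ a b, w a b = w b a) {x : Fin N → A} (hx : IsEnergyMinimizer s w Set.univ x)
    (i : Fin N) {z : A} (hz : ∀ j ∈ Finset.univ.erase i, z ≠ x j) :
    ∑ b ∈ Finset.univ.erase i, w (x i) (x b) / dist (x i) (x b) ^ s ≤
      ∑ b ∈ Finset.univ.erase i, w z (x b) / dist z (x b) ^ s := by
  have hz' (j : Fin N) (hj : j ≠ i) : z ≠ x j := hz j (by simp [hj])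
  have hinj : Function.Injective (Function.update x i z) := by
    intro a b hab
    by_cases ha : a = i <;> by_cases hb : b = i
    · rw [ha, hb]
    · subst ha
      rw [Function.update_self, Function.update_of_ne hb] at hab
      exact absurd hab (hz' b hb)
    · subst hb
      rw [Function.update_self, Function.update_of_ne ha] at hab
      exact absurd hab.symm (hz' a ha)
    · rw [Function.update_of_ne ha, Function.update_of_ne hb] at hab
      exact hx.1 hab
  have h := hx.2.2 _ hinj fun _ => Set.mem_univ _
  rw [rieszEnergy_eq_add_potential hw x i, rieszEnergy_eq_add_potential hw _ i] at h
  have hrest : (∑ a ∈ Finset.univ.erase i, ∑ b ∈ Finset.univ.erase i,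
      if a = b then 0 else w (Function.update x i z a) (Function.update x i z b) /
        dist (Function.update x i z a) (Function.update x i z b) ^ s) =
      ∑ a ∈ Finset.univ.erase i, ∑ b ∈ Finset.univ.erase i,
        if a = b then 0 else w (x a) (x b) / dist (x a) (x b) ^ s :=
    Finset.sum_congr rfl fun a ha => Finset.sum_congr rfl fun b hb => by
      rw [Function.update_of_ne (Finset.ne_of_mem_erase ha),
        Function.update_of_ne (Finset.ne_of_mem_erase hb)]
  have hpot : (∑ b ∈ Finset.univ.erase i,
      w (Function.update x i z i) (Function.update x i z b) /
        dist (Function.update x i z i) (Function.update x i z b) ^ s) =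
      ∑ b ∈ Finset.univ.erase i, w z (x b) / dist z (x b) ^ s :=
    Finset.sum_congr rfl fun b hb => by
      rw [Function.update_self, Function.update_of_ne (Finset.ne_of_mem_erase hb)]
  rw [hrest, hpot] at h
  linarith

lemma le_sepDist {N : ℕ} (hN : 2 ≤ N) {x : Fin N → A} {d : ℝ}
    (h : ∀ i j, i ≠ j → d ≤ dist (x i) (x j)) : d ≤ sepDist x := by
  refine le_csInf ⟨_, ⟨0, by omega⟩, ⟨1, by omega⟩, by simp, rfl⟩ ?_
  rintro _ ⟨i, j, hij, rfl⟩
  exact h i j hij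

lemma sepDist_le_dist {N : ℕ} (x : Fin N → A) {i j : Fin N} (hij : i ≠ j) :
    sepDist x ≤ dist (x i) (x j) :=
  csInf_le ⟨0, by rintro _ ⟨i, j, -, rfl⟩; exact dist_nonneg⟩ ⟨i, j, hij, rfl⟩

lemma sepDist_le_bestPackingDist [CompactSpace A] {N : ℕ} (hN : 2 ≤ N) {x : Fin N → A}
    (hx : Function.Injective x) : sepDist x ≤ bestPackingDist (Set.univ : Set A) N := by
  refine le_csSup ⟨diam (Set.univ : Set A), ?_⟩ ⟨x, hx, fun _ => Set.mem_univ _, rfl⟩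
  rintro _ ⟨y, -, -, rfl⟩
  exact (sepDist_le_dist y (i := ⟨0, by omega⟩) (j := ⟨1, by omega⟩) (by simp)).trans
    (dist_le_diam_of_mem isCompact_univ.isBounded (Set.mem_univ _) (Set.mem_univ _))

/-- Greedy choice of separated points. -/
lemma exists_separated_of_forall_exists {N : ℕ} {r : ℝ}
    (h : ∀ n < N, ∀ x : Fin n → A, ∃ z, ∀ j, r < dist z (x j)) :
    ∃ x : Fin N → A, ∀ i j, i ≠ j → r < dist (x i) (x j) := by
  suffices H : ∀ n ≤ N, ∃ x : Fin n → A, ∀ i j, i ≠ j → r < dist (x i) (x j) from H N le_rfl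
  intro n
  induction n with
  | zero => exact fun _ => ⟨Fin.elim0, fun i => i.elim0⟩
  | succ n ih =>
    intro hn
    obtain ⟨x, hx⟩ := ih (by omega)
    obtain ⟨z, hz⟩ := h n (by omega) x
    refine ⟨Fin.cons z x, fun i j hij => ?_⟩
    cases i using Fin.cases with
    | zero =>
      cases j using Fin.cases with
      | zero => exact absurd rfl hij
      | succ j => simpa using hz j
    | succ i =>
      cases j using Fin.cases with
      | zero => simpa [dist_comm] using hz i
      | succ j => simpa using hx i j fun h => hij (congrArg Fin.succ h)

/-- Corollary `seps`: separation of weighted minimal energy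
configurations for bounded SLP weights and `s > α`, and the resulting lower bound
for the best-packing distance. -/
theorem stmt_1 {A : Type*} [MetricSpace A] [CompactSpace A] [Infinite A]
    [MeasurableSpace A] [BorelSpace A]
    (α : ℝ) (hα : 0 < α) (μ : Measure A) (C₀ : ℝ)
    (hreg : IsUpperRegular μ α C₀) (hμpos : 0 < μ Set.univ)
    (w : A → A → ℝ) (hw : IsSLPWeight w Set.univ)
    (hwbdd : ∃ M : ℝ, ∀ x y : A, w x y ≤ M)
    (s : ℝ) (hs : α < s) :
    ∃ C₂ > 0,
      (∀ N : ℕ, 2 ≤ N → ∀ x : Fin N → A, IsEnergyMinimizer s w Set.univ x →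
        sepDist x ≥ C₂ * (N : ℝ) ^ (-(1 / α))) ∧
      (∀ N : ℕ, 2 ≤ N →
        bestPackingDist (Set.univ : Set A) N ≥ C₂ * (N : ℝ) ^ (-(1 / α))) := by
  obtain ⟨M, hM⟩ := hwbdd
  have hC₀ : 0 < C₀ := hreg.pos_of_measure_univ_pos hμpos
  have hball (y : A) (t : ℝ) (ht : 0 < t) : μ (closedBall y t) ≤ ENNReal.ofReal (C₀ * t ^ α) :=
    hreg.measure_closedBall_le hα hC₀.le y ht
  obtain ⟨a⟩ : Nonempty A := inferInstance
  have hfin : IsFiniteMeasure μ := by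
    have hd : 0 < diam (Set.univ : Set A) :=
      diam_pos Set.nontrivial_univ isCompact_univ.isBounded
    exact ⟨closedBall_diam_univ a ▸ (hball a _ hd).trans_lt ENNReal.ofReal_lt_top⟩
  have hT : 0 < μ.real Set.univ := ENNReal.toReal_pos hμpos.ne' (measure_ne_top μ _)
  have hsymm (x y : A) : w x y = w y x := hw.2.1 x trivial y trivial
  have hw0 (x y : A) : 0 ≤ w x y := hw.1 x trivial y trivial
  have hMpos : 0 < M := (hw.2.2.2 a trivial).trans_le (hM a a)
  have hs0 : 0 < s := hα.trans hs
  obtain ⟨c, hc, η, hη, hwc⟩ := hw.exists_lower_bound_near_diagonal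
  have hq1 : (2 : ℝ) ^ (α - s) < 1 :=
    Real.rpow_lt_one_of_one_lt_of_neg one_lt_two (by linarith)
  have hq : 0 < (1 - (2 : ℝ) ^ (α - s))⁻¹ := inv_pos.mpr (by linarith)
  set L : ℝ := M * (2 ^ α * (1 - 2 ^ (α - s))⁻¹) with hL
  have hL0 : 0 < L := by positivity
  set K : ℝ := (μ.real Set.univ / (2 * C₀)) ^ (1 / α) with hK
  have hK0 : 0 < K := by positivity
  have hrN {N : ℕ} (hN : 2 ≤ N) :
      N * (C₀ * (K * (N : ℝ) ^ (-(1 / α))) ^ α) ≤ μ.real Set.univ / 2 := by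
    have hN0 : (0 : ℝ) < N := by positivity
    rw [Real.mul_rpow hK0.le (by positivity), hK, ← Real.rpow_mul (by positivity),
      ← Real.rpow_mul hN0.le, neg_mul, one_div_mul_cancel hα.ne', Real.rpow_one,
      Real.rpow_neg_one]
    apply le_of_eq
    field_simp
  refine ⟨min K (min η ((c / L) ^ (1 / s) * K)), by positivity, ?_, ?_⟩
  · intro N hN x hx
    have hN0 : (0 : ℝ) < N := by positivity
    have hP : 0 < (N : ℝ) ^ (-(1 / α)) := by positivity
    refine le_sepDist hN fun i j hij => ?_
    have hdist : 0 < dist (x i) (x j) := dist_pos.mpr (hx.1.ne hij)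
    rcases le_or_gt η (dist (x i) (x j)) with hfar | hnear
    · have hP1 : (N : ℝ) ^ (-(1 / α)) ≤ 1 :=
        Real.rpow_le_one_of_one_le_of_nonpos (by exact_mod_cast (by omega : 1 ≤ N))
          (neg_nonpos.mpr (by positivity))
      calc min K (min η ((c / L) ^ (1 / s) * K)) * (N : ℝ) ^ (-(1 / α))
          ≤ η * 1 := by
            gcongr
            exact (min_le_right _ _).trans (min_le_left _ _)
        _ ≤ _ := by rwa [mul_one]
    · set r : ℝ := K * (N : ℝ) ^ (-(1 / α)) with hr
      have hr0 : 0 < r := by positivity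
      have hU := le_of_forall_le_potential hT hα hs hC₀.le hr0 hMpos.le
        (u := ∑ b ∈ Finset.univ.erase i, w (x i) (x b) / dist (x i) (x b) ^ s)
        (Finset.sum_nonneg fun b _ => div_nonneg (hw0 _ _) (by positivity)) hball (hrN hN)
        (Finset.univ.erase i) ((Finset.card_le_univ _).trans (by simp)) x fun z hz => by
          refine (hx.potential_le hsymm i fun j hj =>
            dist_pos.mp (hr0.trans (hz j hj))).trans (Finset.sum_le_sum fun j _ => ?_)
          rw [Real.rpow_neg dist_nonneg, ← div_eq_mul_inv]
          exact div_le_div_of_nonneg_right (hM _ _) (by positivity)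
      have hterm : c / dist (x i) (x j) ^ s ≤ L * r ^ (-s) := by
        calc c / dist (x i) (x j) ^ s ≤ w (x i) (x j) / dist (x i) (x j) ^ s :=
              div_le_div_of_nonneg_right (hwc _ _ hnear).le (by positivity)
          _ ≤ ∑ b ∈ Finset.univ.erase i, w (x i) (x b) / dist (x i) (x b) ^ s :=
              Finset.single_le_sum (f := fun b => w (x i) (x b) / dist (x i) (x b) ^ s)
                (fun b _ => div_nonneg (hw0 _ _) (by positivity)) (by simp [hij.symm])
          _ ≤ _ := hU
          _ = _ := by rw [hL]; ring
      have hpow : ((c / L) ^ (1 / s) * r) ^ s ≤ dist (x i) (x j) ^ s := by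
        rw [Real.mul_rpow (by positivity) hr0.le, ← Real.rpow_mul (by positivity),
          one_div_mul_cancel hs0.ne', Real.rpow_one]
        rw [Real.rpow_neg hr0.le, ← div_eq_mul_inv,
          div_le_div_iff₀ (by positivity) (by positivity)] at hterm
        rw [div_mul_eq_mul_div, div_le_iff₀ hL0]
        linarith
      calc min K (min η ((c / L) ^ (1 / s) * K)) * (N : ℝ) ^ (-(1 / α))
          ≤ (c / L) ^ (1 / s) * K * (N : ℝ) ^ (-(1 / α)) := by
            gcongr
            exact (min_le_right _ _).trans (min_le_right _ _)
        _ = (c / L) ^ (1 / s) * r := by rw [hr]; ring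
        _ ≤ dist (x i) (x j) := (Real.rpow_le_rpow_iff (by positivity) hdist.le hs0).mp hpow
  · intro N hN
    have hN0 : (0 : ℝ) < N := by positivity
    have hr0 : 0 < K * (N : ℝ) ^ (-(1 / α)) := by positivity
    obtain ⟨x, hx⟩ := exists_separated_of_forall_exists (A := A) (N := N)
      (r := K * (N : ℝ) ^ (-(1 / α))) fun n hn x => by
        have hmass := half_measure_le_measure_compl_balls (by positivity) (hrN hN)
          (Finset.univ : Finset (Fin n)) (by simpa using hn.le) x fun y => hball y _ hr0
        obtain ⟨z, hz⟩ := nonempty_of_measure_ne_zero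
          ((ENNReal.ofReal_pos.mpr (half_pos hT)).trans_le hmass).ne'
        exact ⟨z, by simpa using hz⟩
    have hinj : Function.Injective x := fun i j hij => by
      by_contra hne
      exact (hr0.trans (hx i j hne)).ne' (by rw [hij, dist_self])
    calc min K (min η ((c / L) ^ (1 / s) * K)) * (N : ℝ) ^ (-(1 / α))
        ≤ K * (N : ℝ) ^ (-(1 / α)) := by
          gcongr
          exact min_le_left _ _
      _ ≤ sepDist x := le_sepDist hN fun i j hij => (hx i j hij).le
      _ ≤ _ := sepDist_le_bestPackingDist hN hinj
end
end

section
/- Let d ≥ 2, let 𝕊^d be the unit sphere in ℝ^{d+1} with the Euclidean metric, and let γ_d := Γ((d+1)/2)/(Γ(d/2)Γ(1/2)). For s > d and N ≥ 2, every N-point configuration ω*_N minimizing the unweighted Riesz s-energy E_s(ω_N) = Σ_{i≠j} |x_i − x_j|^{−s} over N-point subsets of 𝕊^d satisfies δ(ω*_N) ≥ (d/γ_d)^{1/d} (1 − d/s)^{1/d} (d/s)^{1/s} N^{−1/d}. -/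
open Metric MeasureTheory Filter
open scoped ENNReal NNReal

noncomputable section

variable {A : Type*} [MetricSpace A]

/-- The constant `γ_d = Γ((d+1)/2)/(Γ(d/2)Γ(1/2))`. -/
def gammaD (d : ℕ) : ℝ :=
  Real.Gamma (((d : ℝ) + 1) / 2) / (Real.Gamma ((d : ℝ) / 2) * Real.Gamma (1 / 2))

/-- The `i`-th point contributes to the energy twice its potential, plus a term that does not
depend on its position. -/
lemma exists_rieszEnergy_update_eq {N : ℕ} (s : ℝ) (x : Fin N → A) (i : Fin N) :
    ∃ R : ℝ, ∀ y : A, rieszEnergy s (fun _ _ => (1 : ℝ)) (Function.update x i y) =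
      R + 2 * ∑ j ∈ Finset.univ.erase i, (dist y (x j) ^ s)⁻¹ := by
  refine ⟨∑ k ∈ Finset.univ.erase i, ∑ j ∈ Finset.univ.erase i,
    if k = j then 0 else 1 / dist (x k) (x j) ^ s, fun y => ?_⟩
  have hrow : ∀ k ∈ Finset.univ.erase i,
      (∑ j, if k = j then (0 : ℝ) else
        1 / dist (Function.update x i y k) (Function.update x i y j) ^ s) =
      (dist y (x k) ^ s)⁻¹ + ∑ j ∈ Finset.univ.erase i,
        if k = j then 0 else 1 / dist (x k) (x j) ^ s := by
    intro k hk
    have hki : k ≠ i := Finset.ne_of_mem_erase hk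
    rw [← Finset.add_sum_erase _ _ (Finset.mem_univ i)]
    congr 1
    · simp [hki, dist_comm]
    · refine Finset.sum_congr rfl fun j hj => ?_
      simp [hki, Finset.ne_of_mem_erase hj]
  have hself : (∑ j, if i = j then (0 : ℝ) else
        1 / dist (Function.update x i y i) (Function.update x i y j) ^ s) =
      ∑ j ∈ Finset.univ.erase i, (dist y (x j) ^ s)⁻¹ := by
    rw [← Finset.add_sum_erase _ _ (Finset.mem_univ i), if_pos rfl, zero_add]
    refine Finset.sum_congr rfl fun j hj => ?_
    have hji := Finset.ne_of_mem_erase hj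
    simp [hji, hji.symm]
  rw [rieszEnergy, ← Finset.add_sum_erase _ _ (Finset.mem_univ i), hself,
    Finset.sum_congr rfl hrow, Finset.sum_add_distrib]
  ring

/-- Each point of a minimizing configuration minimizes the potential of the remaining points. -/
lemma IsEnergyMinimizer.potential_le_s15 {N : ℕ} {s : ℝ} {K : Set A} {x : Fin N → A}
    (hx : IsEnergyMinimizer s (fun _ _ => (1 : ℝ)) K x) (i : Fin N) {y : A} (hy : y ∈ K)
    (hne : ∀ j, j ≠ i → y ≠ x j) :
    ∑ j ∈ Finset.univ.erase i, (dist (x i) (x j) ^ s)⁻¹ ≤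
      ∑ j ∈ Finset.univ.erase i, (dist y (x j) ^ s)⁻¹ := by
  obtain ⟨hinj, hK, hmin⟩ := hx
  obtain ⟨R, hR⟩ := exists_rieszEnergy_update_eq s x i
  have hinj' : Function.Injective (Function.update x i y) := by
    intro a b hab
    by_cases ha : a = i <;> by_cases hb : b = i
    · rw [ha, hb]
    · subst ha
      simp only [Function.update_self, Function.update_of_ne hb] at hab
      exact absurd hab (hne b hb)
    · subst hb
      simp only [Function.update_self, Function.update_of_ne ha] at hab
      exact absurd hab.symm (hne a ha)
    · simp only [Function.update_of_ne ha, Function.update_of_ne hb] at hab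
      exact hinj hab
  have hK' : ∀ j, Function.update x i y j ∈ K := by
    intro j
    by_cases hj : j = i
    · subst hj; simpa using hy
    · simpa [hj] using hK j
  have h := hmin _ hinj' hK'
  have hself := hR (x i)
  rw [Function.update_eq_self] at hself
  rw [hR y, hself] at h
  linarith

/-- Riesz potential of an upper `α`-regular measure away from the singularity. -/
lemma lintegral_inv_dist_rpow_le [MeasurableSpace A] [BorelSpace A] (σ : Measure A)
    {α s C r : ℝ} (hα : 0 < α) (hs : α < s) (hC : 0 ≤ C) (hr : 0 < r) (p : A)
    (hreg : ∀ t : ℝ, 0 < t → σ (closedBall p t) ≤ ENNReal.ofReal (C * t ^ α)) :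
    ∫⁻ y in {y | r < dist y p}, ENNReal.ofReal ((dist y p ^ s)⁻¹) ∂σ ≤
      ENNReal.ofReal (C * (r ^ (α - s) / (1 - α / s))) := by
  have hs0 : 0 < s := hα.trans hs
  have hmeas : Measurable fun y : A => (dist y p ^ s)⁻¹ := by
    have : Measurable fun y : A => dist y p := (continuous_id.dist continuous_const).measurable
    exact (this.pow_const s).inv
  have hset : MeasurableSet {y : A | r < dist y p} :=
    (isOpen_lt continuous_const (continuous_id.dist continuous_const)).measurableSet
  rw [lintegral_eq_lintegral_meas_lt _ (ae_of_all _ fun y => by positivity) hmeas.aemeasurable]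
  have hbound : ∀ t ∈ Set.Ioi (0 : ℝ),
      (σ.restrict {y | r < dist y p}) {a | t < (dist a p ^ s)⁻¹} ≤
        (Set.Ioc 0 (r ^ (-s))).indicator (fun t => ENNReal.ofReal (C * t ^ (-(α / s)))) t := by
    intro t ht
    have ht : 0 < t := ht
    rw [Measure.restrict_apply' hset]
    by_cases htr : t ≤ r ^ (-s)
    · rw [Set.indicator_of_mem (show t ∈ Set.Ioc 0 (r ^ (-s)) from ⟨ht, htr⟩)]
      have hsub : {a | t < (dist a p ^ s)⁻¹} ∩ {y | r < dist y p} ⊆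
          closedBall p (t ^ (-(1 / s))) := by
        rintro a ⟨ha, hra⟩
        have ha : t < (dist a p ^ s)⁻¹ := ha
        have hd : 0 < dist a p := hr.trans hra
        rw [mem_closedBall]
        have h1 : ((dist a p ^ s)⁻¹) ^ (-(1 / s)) = dist a p := by
          rw [← Real.rpow_neg hd.le, ← Real.rpow_mul hd.le]
          field_simp
          simp
        rw [← h1]
        exact Real.rpow_le_rpow_of_nonpos ht ha.le (neg_nonpos.2 (by positivity))
      refine (measure_mono hsub).trans ((hreg _ (by positivity)).trans (le_of_eq ?_))
      rw [← Real.rpow_mul ht.le]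
      congr 3
      ring
    · have hempty : {a | t < (dist a p ^ s)⁻¹} ∩ {y | r < dist y p} = ∅ := by
        rw [Set.eq_empty_iff_forall_notMem]
        rintro a ⟨ha, hra⟩
        have ha : t < (dist a p ^ s)⁻¹ := ha
        have hra : r < dist a p := hra
        apply htr
        rw [Real.rpow_neg hr.le]
        refine ha.le.trans ?_
        gcongr
      rw [hempty, measure_empty]
      exact zero_le
  have hlt : -1 < -(α / s) := by
    have := (div_lt_one hs0).2 hs
    linarith
  have hrs : 0 ≤ r ^ (-s) := by positivity
  have hint : IntegrableOn (fun t : ℝ => C * t ^ (-(α / s))) (Set.Ioc 0 (r ^ (-s))) := by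
    have := (intervalIntegral.intervalIntegrable_rpow' hlt (a := 0) (b := r ^ (-s)))
    rw [intervalIntegrable_iff_integrableOn_Ioc_of_le hrs] at this
    exact this.const_mul C
  calc _ ≤ ∫⁻ t in Set.Ioi (0 : ℝ),
        (Set.Ioc 0 (r ^ (-s))).indicator (fun t => ENNReal.ofReal (C * t ^ (-(α / s)))) t :=
        setLIntegral_mono' measurableSet_Ioi hbound
    _ ≤ ∫⁻ t, (Set.Ioc 0 (r ^ (-s))).indicator
        (fun t => ENNReal.ofReal (C * t ^ (-(α / s)))) t := setLIntegral_le_lintegral _ _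
    _ = ∫⁻ t in Set.Ioc 0 (r ^ (-s)), ENNReal.ofReal (C * t ^ (-(α / s))) :=
        lintegral_indicator measurableSet_Ioc _
    _ = ENNReal.ofReal (∫ t in Set.Ioc 0 (r ^ (-s)), C * t ^ (-(α / s))) := by
        rw [ofReal_integral_eq_lintegral_ofReal hint]
        refine (ae_restrict_iff' measurableSet_Ioc).2 (ae_of_all _ fun t ht => ?_)
        have := ht.1
        simp only [Pi.zero_apply]
        positivity
    _ = ENNReal.ofReal (C * (r ^ (α - s) / (1 - α / s))) := by
        have hexp : -s * (-(α / s) + 1) = α - s := by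
          field_simp
          ring
        rw [integral_const_mul, ← intervalIntegral.integral_of_le hrs,
          integral_rpow (Or.inl hlt), Real.zero_rpow (by linarith), sub_zero,
          ← Real.rpow_mul hr.le, hexp, neg_add_eq_sub]

/-- Separation of energy minimizers on a set that carries an upper `α`-regular probability
measure, `s > α`. -/
lemma IsEnergyMinimizer.le_dist [MeasurableSpace A] [BorelSpace A] (σ : Measure A)
    [IsProbabilityMeasure σ] {K : Set A} (hσK : ∀ᵐ y ∂σ, y ∈ K)
    {α s C : ℝ} (hα : 0 < α) (hs : α < s) (hC : 0 < C)
    (hreg : ∀ p ∈ K, ∀ t : ℝ, 0 < t → σ (closedBall p t) ≤ ENNReal.ofReal (C * t ^ α))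
    {N : ℕ} {x : Fin N → A} (hx : IsEnergyMinimizer s (fun _ _ => (1 : ℝ)) K x)
    {i j : Fin N} (hij : i ≠ j) :
    (1 / C) ^ (1 / α) * (1 - α / s) ^ (1 / α) * (α / s) ^ (1 / s) * (N : ℝ) ^ (-(1 / α)) ≤
      dist (x i) (x j) := by
  have hs0 : 0 < s := hα.trans hs
  have hN : (0 : ℝ) < N := by exact_mod_cast i.pos
  have hlt : 0 < 1 - α / s := sub_pos.2 ((div_lt_one hs0).2 hs)
  set r : ℝ := (1 / C) ^ (1 / α) * (1 - α / s) ^ (1 / α) * (N : ℝ) ^ (-(1 / α)) with hrdef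
  have hr : 0 < r := by positivity
  have hrα : N * (C * r ^ α) = 1 - α / s := by
    have e1 : ∀ z : ℝ, 0 ≤ z → (z ^ (1 / α)) ^ α = z := fun z hz => by
      rw [← Real.rpow_mul hz]; field_simp; simp
    rw [hrdef, Real.rpow_neg hN.le, Real.mul_rpow (by positivity) (by positivity),
      Real.mul_rpow (by positivity) (by positivity), Real.inv_rpow (by positivity),
      e1 _ (by positivity), e1 _ hlt.le, e1 _ hN.le]
    field_simp
  set U : ℝ := ∑ k ∈ Finset.univ.erase i, (dist (x i) (x k) ^ s)⁻¹ with hU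
  set D : Set A := {y | ∀ k ∈ Finset.univ.erase i, r < dist y (x k)} with hD
  have hopen : ∀ k, MeasurableSet {y : A | r < dist y (x k)} := fun k =>
    (isOpen_lt continuous_const (continuous_id.dist continuous_const)).measurableSet
  have hDeq : D = ⋂ k ∈ Finset.univ.erase i, {y : A | r < dist y (x k)} := by
    ext y; simp [hD]
  have hDm : MeasurableSet D := by
    rw [hDeq]
    exact Finset.measurableSet_biInter _ fun k _ => hopen k
  have hcard : ((Finset.univ.erase i).card : ℝ) ≤ N := by
    exact_mod_cast (Finset.card_le_univ _).trans_eq (Fintype.card_fin N)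
  -- the complement of the holes has measure at least `α / s`
  have hDσ : ENNReal.ofReal (α / s) ≤ σ D := by
    have hcompl : σ Dᶜ ≤ ENNReal.ofReal (1 - α / s) := by
      have hsub : Dᶜ ⊆ ⋃ k ∈ Finset.univ.erase i, closedBall (x k) r := by
        intro y hy
        simpa [hD] using hy
      refine (measure_mono hsub).trans ((measure_biUnion_finset_le _ _).trans ?_)
      refine (Finset.sum_le_sum fun k _ => hreg (x k) (hx.2.1 k) r hr).trans ?_
      rw [Finset.sum_const, nsmul_eq_mul, ← hrα, ENNReal.ofReal_mul hN.le]
      gcongr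
      rw [← ENNReal.ofReal_natCast]
      exact ENNReal.ofReal_le_ofReal hcard
    have h1 : (1 : ℝ≥0∞) = σ D + σ Dᶜ := by rw [measure_add_measure_compl hDm, measure_univ]
    have h2 : ENNReal.ofReal (α / s) + ENNReal.ofReal (1 - α / s) = 1 := by
      rw [← ENNReal.ofReal_add (by positivity) hlt.le]; simp
    have h3 : ENNReal.ofReal (α / s) + ENNReal.ofReal (1 - α / s) ≤
        σ D + ENNReal.ofReal (1 - α / s) := by
      rw [h2, h1]; gcongr
    exact (ENNReal.add_le_add_iff_right ENNReal.ofReal_ne_top).1 h3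
  have hmeas : ∀ k, Measurable fun y : A => ENNReal.ofReal ((dist y (x k) ^ s)⁻¹) := fun k => by
    have : Measurable fun y : A => dist y (x k) :=
      (continuous_id.dist continuous_const).measurable
    exact (this.pow_const s).inv.ennreal_ofReal
  have hmain : ENNReal.ofReal U * ENNReal.ofReal (α / s) ≤ ENNReal.ofReal (r ^ (-s)) := by
    calc ENNReal.ofReal U * ENNReal.ofReal (α / s) ≤ ENNReal.ofReal U * σ D := by gcongr
      _ = ∫⁻ _ in D, ENNReal.ofReal U ∂σ := by rw [setLIntegral_const]
      _ ≤ ∫⁻ y in D, ∑ k ∈ Finset.univ.erase i, ENNReal.ofReal ((dist y (x k) ^ s)⁻¹) ∂σ := by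
          refine lintegral_mono_ae ((ae_restrict_iff' hDm).2 ?_)
          filter_upwards [hσK] with y hyK hyD
          rw [← ENNReal.ofReal_sum_of_nonneg fun k _ => by positivity]
          refine ENNReal.ofReal_le_ofReal (hx.potential_le_s15 i hyK fun k hk h => ?_)
          have := hyD k (by simp [hk])
          rw [h, dist_self] at this
          linarith
      _ = ∑ k ∈ Finset.univ.erase i, ∫⁻ y in D, ENNReal.ofReal ((dist y (x k) ^ s)⁻¹) ∂σ :=
          lintegral_finsetSum _ fun k _ => hmeas k
      _ ≤ ∑ k ∈ Finset.univ.erase i, ENNReal.ofReal (C * (r ^ (α - s) / (1 - α / s))) := by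
          refine Finset.sum_le_sum fun k hk => ?_
          refine (lintegral_mono_set ?_).trans (lintegral_inv_dist_rpow_le σ hα hs hC.le hr (x k)
            (hreg (x k) (hx.2.1 k)))
          exact fun y hy => hy k hk
      _ ≤ ENNReal.ofReal (N * (C * (r ^ (α - s) / (1 - α / s)))) := by
          rw [Finset.sum_const, nsmul_eq_mul, ENNReal.ofReal_mul hN.le]
          gcongr
          rw [← ENNReal.ofReal_natCast]
          exact ENNReal.ofReal_le_ofReal hcard
      _ = ENNReal.ofReal (r ^ (-s)) := by
          congr 1
          rw [← hrα, sub_eq_add_neg, Real.rpow_add hr]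
          have : 0 < r ^ α := by positivity
          field_simp
  have hU0 : 0 ≤ U := Finset.sum_nonneg fun k _ => by positivity
  rw [← ENNReal.ofReal_mul hU0, ENNReal.ofReal_le_ofReal_iff (by positivity)] at hmain
  have hd : 0 < dist (x i) (x j) := dist_pos.2 fun h => hij (hx.1 h)
  have hterm : (dist (x i) (x j) ^ s)⁻¹ ≤ U :=
    Finset.single_le_sum (f := fun k => (dist (x i) (x k) ^ s)⁻¹) (fun k _ => by positivity)
      (Finset.mem_erase.2 ⟨hij.symm, Finset.mem_univ j⟩)
  have hpow : (α / s) * r ^ s ≤ dist (x i) (x j) ^ s := by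
    have h1 := (mul_le_mul_of_nonneg_right hterm (by positivity : 0 ≤ α / s)).trans hmain
    have h2 : 0 < dist (x i) (x j) ^ s := by positivity
    have h3 : 0 < r ^ s := by positivity
    rw [Real.rpow_neg hr.le, inv_mul_eq_div, div_le_iff₀ h2, inv_mul_eq_div, le_div_iff₀ h3] at h1
    exact h1
  have hroot := Real.rpow_le_rpow (by positivity) hpow (by positivity : 0 ≤ 1 / s)
  have e2 : ∀ z : ℝ, 0 ≤ z → (z ^ s) ^ (1 / s) = z := fun z hz => by
    rw [← Real.rpow_mul hz]; field_simp; simp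
  rw [Real.mul_rpow (by positivity) (by positivity), e2 _ hr.le, e2 _ hd.le] at hroot
  refine le_trans (le_of_eq ?_) hroot
  rw [hrdef]
  ring

/-- The left-hand side is the normalized volume of the cone over the spherical cap at height `c`. -/
lemma cap_profile_le (d : ℕ) (hd : 2 ≤ d) {c : ℝ} (hc : c ∈ Set.Icc (-1 : ℝ) 1) :
    c * √(1 - c ^ 2) ^ d / (d + 1) + ∫ h in c..1, √(1 - h ^ 2) ^ d ≤
      √(2 - 2 * c) ^ d / (d + 1) := by
  have hcont : Continuous fun h : ℝ => √(1 - h ^ 2) ^ d := by fun_prop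
  set F : ℝ → ℝ := fun c => √(2 - 2 * c) ^ d / (d + 1) -
    (c * √(1 - c ^ 2) ^ d / (d + 1) - ∫ h in (1 : ℝ)..c, √(1 - h ^ 2) ^ d) with hF
  have hder : ∀ c ∈ Set.Ioo (-1 : ℝ) 1,
      HasDerivAt F (-(d / (d + 1)) * (√(2 - 2 * c) ^ (d - 2) - √(1 - c ^ 2) ^ (d - 2))) c := by
    intro c hc
    have hpos : 0 < 1 - c ^ 2 := by nlinarith [hc.1, hc.2]
    have hpos' : 0 < 2 - 2 * c := by linarith [hc.2]
    have h1 : HasDerivAt (fun c : ℝ => 2 - 2 * c) (-2) c := by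
      simpa using ((hasDerivAt_id c).const_mul 2).const_sub 2
    have h2 : HasDerivAt (fun c : ℝ => 1 - c ^ 2) (-(2 * c)) c := by
      simpa using (hasDerivAt_pow 2 c).const_sub 1
    have h3 := ((h1.sqrt hpos'.ne').pow d).div_const ((d : ℝ) + 1)
    have h4 := ((hasDerivAt_id c).mul ((h2.sqrt hpos.ne').pow d)).div_const ((d : ℝ) + 1)
    have h5 : HasDerivAt (fun c => ∫ h in (1 : ℝ)..c, √(1 - h ^ 2) ^ d)
        (√(1 - c ^ 2) ^ d) c :=
      intervalIntegral.integral_hasDerivAt_right (hcont.intervalIntegrable _ _)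
        hcont.stronglyMeasurable.stronglyMeasurableAtFilter hcont.continuousAt
    have h6 := h3.sub (h4.sub h5)
    refine h6.congr_deriv ?_
    obtain ⟨k, rfl⟩ : ∃ k, d = k + 2 := ⟨d - 2, by omega⟩
    have ha : 0 < √(1 - c ^ 2) := Real.sqrt_pos.2 hpos
    have hb : 0 < √(2 - 2 * c) := Real.sqrt_pos.2 hpos'
    have ha2 : √(1 - c ^ 2) ^ 2 = 1 - c ^ 2 := Real.sq_sqrt hpos.le
    simp only [Nat.add_sub_cancel, show k + 2 - 1 = k + 1 by omega, id, Pi.pow_apply]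
    have hk : ((k + 2 : ℕ) : ℝ) + 1 ≠ 0 := by positivity
    generalize √(1 - c ^ 2) = a at *
    generalize √(2 - 2 * c) = b at *
    field_simp
    push_cast
    linear_combination ((k : ℝ) + 2) * b * a * a ^ k * ha2
  have hanti : AntitoneOn F (Set.Icc (-1) 1) := by
    refine antitoneOn_of_deriv_nonpos (convex_Icc _ _) ?_ ?_ ?_
    · have : Continuous fun c => ∫ h in (1 : ℝ)..c, √(1 - h ^ 2) ^ d :=
        intervalIntegral.continuous_primitive (fun a b => hcont.intervalIntegrable a b) 1
      exact Continuous.continuousOn (by fun_prop)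
    · rw [interior_Icc]
      exact fun c hc => (hder c hc).differentiableAt.differentiableWithinAt
    · rw [interior_Icc]
      intro c hc
      rw [(hder c hc).deriv]
      have : √(1 - c ^ 2) ^ (d - 2) ≤ √(2 - 2 * c) ^ (d - 2) := by
        refine pow_le_pow_left₀ (Real.sqrt_nonneg _) (Real.sqrt_le_sqrt ?_) _
        nlinarith [sq_nonneg (c - 1)]
      have h0 : (0 : ℝ) ≤ d / (d + 1) := by positivity
      nlinarith
  have h := hanti hc (Set.right_mem_Icc.2 (by norm_num)) hc.2
  have hF1 : F 1 = 0 := by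
    have : d ≠ 0 := by omega
    simp [hF, this]
  rw [hF1] at h
  simp only [hF] at h
  rw [intervalIntegral.integral_symm]
  linarith

/-- Cavalieri bound for a set whose slices are controlled on two adjacent intervals. -/
lemma volume_prod_le_of_slices {E : Type*} [MeasureSpace E] [SFinite (volume : Measure E)]
    {S : Set (ℝ × E)} (hS : MeasurableSet S) {a b e : ℝ} (hab : a ≤ b) (hbe : b ≤ e)
    {f g : ℝ → ℝ} (hf : Continuous f) (hg : Continuous g) (ω : ℝ≥0∞)
    (hf0 : ∀ h ∈ Set.Ioc a b, 0 ≤ f h) (hg0 : ∀ h ∈ Set.Ioc b e, 0 ≤ g h)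
    (hlow : ∀ h < a, Prod.mk h ⁻¹' S = ∅) (hhigh : ∀ h, e < h → Prod.mk h ⁻¹' S = ∅)
    (hfS : ∀ h ∈ Set.Ioc a b, volume (Prod.mk h ⁻¹' S) ≤ ENNReal.ofReal (f h) * ω)
    (hgS : ∀ h ∈ Set.Ioc b e, volume (Prod.mk h ⁻¹' S) ≤ ENNReal.ofReal (g h) * ω) :
    volume S ≤ ENNReal.ofReal ((∫ h in a..b, f h) + ∫ h in b..e, g h) * ω := by
  have key : ∀ {u v : ℝ} {k : ℝ → ℝ}, u ≤ v → Continuous k → (∀ h ∈ Set.Ioc u v, 0 ≤ k h) →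
      (∀ h ∈ Set.Ioc u v, volume (Prod.mk h ⁻¹' S) ≤ ENNReal.ofReal (k h) * ω) →
      0 ≤ ∫ h in u..v, k h ∧ ∫⁻ h in Set.Ioc u v, volume (Prod.mk h ⁻¹' S) ≤
        ENNReal.ofReal (∫ h in u..v, k h) * ω := by
    intro u v k huv hk hk0 hkS
    have hnn : 0 ≤ᵐ[volume.restrict (Set.Ioc u v)] k :=
      (ae_restrict_iff' measurableSet_Ioc).2 (ae_of_all _ hk0)
    rw [intervalIntegral.integral_of_le huv]
    refine ⟨integral_nonneg_of_ae hnn, (setLIntegral_mono' measurableSet_Ioc hkS).trans ?_⟩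
    rw [lintegral_mul_const _ hk.measurable.ennreal_ofReal,
      ofReal_integral_eq_lintegral_ofReal (hk.integrableOn_Ioc) hnn]
  obtain ⟨hf1, hf2⟩ := key hab hf hf0 hfS
  obtain ⟨hg1, hg2⟩ := key hbe hg hg0 hgS
  rw [Measure.volume_eq_prod, Measure.prod_apply hS, ENNReal.ofReal_add hf1 hg1, add_mul]
  have hae : (fun h => volume (Prod.mk h ⁻¹' S)) =ᵐ[volume]
      (Set.Ioc a b ∪ Set.Ioc b e).indicator (fun h => volume (Prod.mk h ⁻¹' S)) := by
    filter_upwards [compl_mem_ae_iff.2 (measure_singleton a)] with h ha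
    rw [Set.Ioc_union_Ioc_eq_Ioc hab hbe]
    by_cases hh : h ∈ Set.Ioc a e
    · rw [Set.indicator_of_mem hh]
    · rw [Set.indicator_of_notMem hh]
      rcases lt_trichotomy h a with h1 | h1 | h1
      · simp [hlow h h1]
      · exact absurd h1 ha
      · have : e < h := by
          by_contra hcon
          exact hh ⟨h1, not_lt.1 hcon⟩
        simp [hhigh h this]
  rw [lintegral_congr_ae hae, lintegral_indicator (measurableSet_Ioc.union measurableSet_Ioc)]
  exact (lintegral_union_le _ _ _).trans (add_le_add hf2 hg2)

/-- Volume of the part of the unit ball lying in a circular cone around the first axis. -/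
lemma volume_cone_le (d : ℕ) (hd : 2 ≤ d) {c : ℝ} (hc : c ∈ Set.Icc (-1 : ℝ) 1) :
    volume {p : ℝ × EuclideanSpace ℝ (Fin d) |
        p.1 ^ 2 + ‖p.2‖ ^ 2 < 1 ∧ c * √(p.1 ^ 2 + ‖p.2‖ ^ 2) ≤ p.1} ≤
      ENNReal.ofReal (√(2 - 2 * c) ^ d / (d + 1)) *
        volume (ball (0 : EuclideanSpace ℝ (Fin d)) 1) := by
  have : Nonempty (Fin d) := ⟨⟨0, by omega⟩⟩
  set S := {p : ℝ × EuclideanSpace ℝ (Fin d) |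
        p.1 ^ 2 + ‖p.2‖ ^ 2 < 1 ∧ c * √(p.1 ^ 2 + ‖p.2‖ ^ 2) ≤ p.1} with hSdef
  have hS : MeasurableSet S := by
    rw [hSdef, Set.ofPred_and]
    refine MeasurableSet.inter ?_ ?_
    · exact measurableSet_lt (by fun_prop) (by fun_prop)
    · exact measurableSet_le (by fun_prop) (by fun_prop)
  have hball : ∀ ρ : ℝ, 0 ≤ ρ → volume (ball (0 : EuclideanSpace ℝ (Fin d)) ρ) =
      ENNReal.ofReal (ρ ^ d) * volume (ball (0 : EuclideanSpace ℝ (Fin d)) 1) := by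
    intro ρ hρ
    simpa using Measure.addHaar_ball volume (0 : EuclideanSpace ℝ (Fin d)) hρ
  have hcball : ∀ ρ : ℝ, 0 ≤ ρ → volume (closedBall (0 : EuclideanSpace ℝ (Fin d)) ρ) =
      ENNReal.ofReal (ρ ^ d) * volume (ball (0 : EuclideanSpace ℝ (Fin d)) 1) := by
    intro ρ hρ
    simpa using Measure.addHaar_closedBall volume (0 : EuclideanSpace ℝ (Fin d)) hρ
  have hsub : ∀ h : ℝ, Prod.mk h ⁻¹' S ⊆ ball (0 : EuclideanSpace ℝ (Fin d)) √(1 - h ^ 2) := by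
    rintro h v ⟨hv, -⟩
    rw [mem_ball_zero_iff]
    exact Real.lt_sqrt_of_sq_lt (by simp only at hv; linarith)
  have hq : Continuous fun h : ℝ => √(1 - h ^ 2) ^ d := by fun_prop
  have hhigh : ∀ h : ℝ, 1 < h → Prod.mk h ⁻¹' S = ∅ := by
    intro h hh
    rw [Set.eq_empty_iff_forall_notMem]
    rintro v ⟨hv, -⟩
    simp only at hv
    nlinarith [sq_nonneg ‖v‖]
  have hslice : ∀ h : ℝ, volume (Prod.mk h ⁻¹' S) ≤ ENNReal.ofReal (√(1 - h ^ 2) ^ d) *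
      volume (ball (0 : EuclideanSpace ℝ (Fin d)) 1) := fun h =>
    (measure_mono (hsub h)).trans_eq (hball _ (Real.sqrt_nonneg _))
  have hc2 : 0 ≤ 1 - c ^ 2 := by nlinarith [hc.1, hc.2]
  rcases lt_or_ge 0 c with hpos | hneg
  · set k : ℝ := √(1 - c ^ 2) / c with hk
    have hk0 : 0 ≤ k := by positivity
    have hk2 : k ^ 2 * c ^ 2 = 1 - c ^ 2 := by
      rw [hk, div_pow, Real.sq_sqrt hc2]; field_simp
    refine (volume_prod_le_of_slices hS hpos.le hc.2 (f := fun h => (h * k) ^ d)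
      (by fun_prop) hq _ (fun h hh => ?_) (fun h _ => by positivity) (fun h hh => ?_) hhigh
      (fun h hh => ?_) fun h _ => hslice h).trans ?_
    · have := hh.1
      positivity
    · rw [Set.eq_empty_iff_forall_notMem]
      rintro v ⟨-, hv⟩
      have : 0 ≤ c * √(h ^ 2 + ‖v‖ ^ 2) := by positivity
      simp only at hv
      linarith
    · have hh0 := hh.1
      rw [← hcball _ (by positivity)]
      refine measure_mono ?_
      rintro v ⟨-, hv⟩
      simp only at hv
      rw [mem_closedBall_zero_iff]
      refine abs_le_of_sq_le_sq' ?_ (by positivity) |>.2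
      have h1 := mul_self_le_mul_self (by positivity) hv
      have h2 : √(h ^ 2 + ‖v‖ ^ 2) ^ 2 = h ^ 2 + ‖v‖ ^ 2 := Real.sq_sqrt (by positivity)
      have h3 : c ^ 2 * ‖v‖ ^ 2 ≤ c ^ 2 * (h * k) ^ 2 := by nlinarith
      exact le_of_mul_le_mul_left h3 (by positivity)
    · gcongr
      refine le_trans (le_of_eq ?_) (cap_profile_le d hd hc)
      congr 1
      simp only [mul_pow]
      rw [intervalIntegral.integral_mul_const, integral_pow, hk, div_pow]
      field_simp
      simp [pow_succ]
      ring
  · set k : ℝ := √(1 - c ^ 2) / (-c) with hk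
    have hk0 : 0 ≤ k := div_nonneg (Real.sqrt_nonneg _) (by linarith)
    have hk2 : ∀ h, c < h → h ≤ 0 → k ^ 2 * c ^ 2 = 1 - c ^ 2 := by
      intro h h1 h2
      have : c ≠ 0 := by linarith
      rw [hk, div_pow, Real.sq_sqrt hc2]; field_simp
    have hle : ∀ h, c < h → h ≤ 0 → -h * k ≤ √(1 - h ^ 2) := by
      intro h h1 h2
      refine Real.le_sqrt_of_sq_le ?_
      have h3 := hk2 h h1 h2
      have h4 : h ^ 2 ≤ c ^ 2 := by nlinarith
      nlinarith [mul_le_mul_of_nonneg_right h4 (sq_nonneg k)]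
    refine (volume_prod_le_of_slices hS hneg zero_le_one
      (f := fun h => √(1 - h ^ 2) ^ d - (-h * k) ^ d)
      (by fun_prop) hq _ (fun h hh => ?_) (fun h _ => by positivity) (fun h hh => ?_) hhigh
      (fun h hh => ?_) fun h _ => hslice h).trans ?_
    · have := hle h hh.1 hh.2
      have h0 : 0 ≤ -h * k := mul_nonneg (by linarith [hh.2]) hk0
      exact sub_nonneg.2 (by gcongr)
    · rw [Set.eq_empty_iff_forall_notMem]
      rintro v ⟨hv1, hv⟩
      simp only at hv hv1
      have : √(h ^ 2 + ‖v‖ ^ 2) ≤ 1 := Real.sqrt_le_one.2 hv1.le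
      nlinarith
    · have h0 : 0 ≤ -h * k := mul_nonneg (by linarith [hh.2]) hk0
      have hsub' : Prod.mk h ⁻¹' S ⊆ ball (0 : EuclideanSpace ℝ (Fin d)) √(1 - h ^ 2) \
          ball (0 : EuclideanSpace ℝ (Fin d)) (-h * k) := by
        refine fun v hv => ⟨hsub h hv, fun hv' => ?_⟩
        rw [mem_ball_zero_iff] at hv'
        have hv2 : c * √(h ^ 2 + ‖v‖ ^ 2) ≤ h := hv.2
        have h1 := mul_self_le_mul_self (by linarith [hh.2] : 0 ≤ -h)
          (by linarith : -h ≤ -c * √(h ^ 2 + ‖v‖ ^ 2))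
        have h2 : √(h ^ 2 + ‖v‖ ^ 2) ^ 2 = h ^ 2 + ‖v‖ ^ 2 := Real.sq_sqrt (by positivity)
        have h3 := hk2 h hh.1 hh.2
        have h4 : ‖v‖ ^ 2 < (-h * k) ^ 2 := by gcongr
        have hc0 : 0 < c ^ 2 := sq_pos_of_neg (hh.1.trans_le hh.2)
        have h5 := mul_lt_mul_of_pos_left h4 hc0
        nlinarith
      refine (measure_mono hsub').trans ?_
      rw [measure_sdiff (ball_subset_ball (hle h hh.1 hh.2)) measurableSet_ball.nullMeasurableSet
        measure_ball_lt_top.ne, hball _ (Real.sqrt_nonneg _), hball _ h0,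
        ENNReal.ofReal_sub _ (by positivity), ENNReal.sub_mul]
      exact fun _ _ => measure_ball_lt_top.ne
    · gcongr
      refine le_trans (le_of_eq ?_) (cap_profile_le d hd hc)
      have hmono : ∫ h in c..0, (-h * k) ^ d = -(c * √(1 - c ^ 2) ^ d / (d + 1)) := by
        simp only [mul_pow]
        rw [intervalIntegral.integral_mul_const,
          intervalIntegral.integral_comp_neg (fun h => h ^ d), integral_pow, hk, div_pow]
        rcases eq_or_lt_of_le hneg with h0 | h0
        · simp [h0]
        · have : -c ≠ 0 := by linarith
          field_simp
          simp [pow_succ]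
          ring
      rw [intervalIntegral.integral_sub (hq.intervalIntegrable _ _)
        (Continuous.intervalIntegrable (by fun_prop) _ _), hmono,
        ← intervalIntegral.integral_add_adjacent_intervals (hq.intervalIntegrable c 0)
          (hq.intervalIntegrable 0 1)]
      ring

/-- Volume of the part of the unit ball lying in a circular cone around the unit vector `p`. -/
lemma volume_cone_inner_le (d : ℕ) (hd : 2 ≤ d) {c : ℝ} (hc : c ∈ Set.Icc (-1 : ℝ) 1)
    {p : EuclideanSpace ℝ (Fin (d + 1))} (hp : ‖p‖ = 1) :
    volume {y : EuclideanSpace ℝ (Fin (d + 1)) | ‖y‖ < 1 ∧ c * ‖y‖ ≤ inner ℝ p y} ≤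
      ENNReal.ofReal (√(2 - 2 * c) ^ d / (d + 1)) *
        volume (ball (0 : EuclideanSpace ℝ (Fin d)) 1) := by
  obtain ⟨b, hb⟩ := Orthonormal.exists_orthonormalBasis_extension_of_card_eq (𝕜 := ℝ)
    (E := EuclideanSpace ℝ (Fin (d + 1))) (ι := Fin (d + 1)) (by simp)
    (v := fun _ => p) (s := {0}) (by
      rw [orthonormal_iff_ite]
      rintro ⟨i, hi⟩ ⟨j, hj⟩
      obtain rfl : i = 0 := hi
      obtain rfl : j = 0 := hj
      simp [hp])
  have hb0 : b 0 = p := hb 0 rfl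
  have hΦ := (((MeasurePreserving.id (volume : Measure ℝ)).prod
    (PiLp.volume_preserving_toLp (Fin d))).comp
    (volume_preserving_piFinSuccAbove (fun _ : Fin (d + 1) => ℝ) 0)).comp
    ((PiLp.volume_preserving_ofLp (Fin (d + 1))).comp b.measurePreserving_repr)
  refine le_trans ?_ (volume_cone_le d hd hc)
  rw [Measure.volume_eq_prod]
  refine le_trans (measure_mono ?_) (hΦ.measure_preimage_le _)
  intro y hy
  have hnorm : (b.repr y 0) ^ 2 +
      ‖(WithLp.toLp 2 fun j : Fin d => b.repr y j.succ : EuclideanSpace ℝ (Fin d))‖ ^ 2 =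
      ‖y‖ ^ 2 := by
    rw [← b.repr.norm_map y, EuclideanSpace.norm_sq_eq, EuclideanSpace.norm_sq_eq,
      Fin.sum_univ_succ]
    simp
  have hinner : b.repr y 0 = inner ℝ p y := by rw [b.repr_apply_apply, hb0]
  have hgoal : (b.repr y 0) ^ 2 +
      ‖(WithLp.toLp 2 fun j : Fin d => b.repr y j.succ : EuclideanSpace ℝ (Fin d))‖ ^ 2 < 1 ∧
      c * √((b.repr y 0) ^ 2 +
      ‖(WithLp.toLp 2 fun j : Fin d => b.repr y j.succ : EuclideanSpace ℝ (Fin d))‖ ^ 2) ≤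
      b.repr y 0 := by
    rw [hnorm, Real.sqrt_sq (norm_nonneg _), hinner]
    exact ⟨by nlinarith [hy.1, norm_nonneg y], hy.2⟩
  exact hgoal

/-- The uniform probability measure on the unit sphere, as the radial projection of the uniform
measure on the unit ball. -/
def uniformSphere (d : ℕ) : Measure (EuclideanSpace ℝ (Fin (d + 1))) :=
  (ProbabilityTheory.cond volume (ball (0 : EuclideanSpace ℝ (Fin (d + 1))) 1)).map
    fun y => ‖y‖⁻¹ • y

lemma measurable_inv_norm_smul (d : ℕ) :
    Measurable fun y : EuclideanSpace ℝ (Fin (d + 1)) => ‖y‖⁻¹ • y :=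
  measurable_norm.inv.smul measurable_id

instance isProbabilityMeasure_uniformSphere (d : ℕ) : IsProbabilityMeasure (uniformSphere d) := by
  have := ProbabilityTheory.cond_isProbabilityMeasure_of_finite (μ := volume)
    (s := ball (0 : EuclideanSpace ℝ (Fin (d + 1))) 1)
    (measure_ball_pos _ _ one_pos).ne' measure_ball_lt_top.ne
  exact Measure.isProbabilityMeasure_map (measurable_inv_norm_smul d).aemeasurable

lemma ae_uniformSphere_mem_sphere (d : ℕ) :
    ∀ᵐ y ∂uniformSphere d, y ∈ sphere (0 : EuclideanSpace ℝ (Fin (d + 1))) 1 := by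
  refine (ae_map_iff (p := (· ∈ sphere (0 : EuclideanSpace ℝ (Fin (d + 1))) 1))
    (measurable_inv_norm_smul d).aemeasurable isClosed_sphere.measurableSet).2 ?_
  refine ProbabilityTheory.cond_absolutelyContinuous.ae_le ?_
  filter_upwards [compl_mem_ae_iff.2 (measure_singleton 0)] with y hy
  have : ‖y‖ ≠ 0 := norm_ne_zero_iff.2 hy
  simp [norm_smul, this]

lemma gammaD_div_mul_volume (d : ℕ) (hd : d ≠ 0) :
    gammaD d / d * (√Real.pi ^ (d + 1) / Real.Gamma (((d + 1 : ℕ) : ℝ) / 2 + 1)) =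
      √Real.pi ^ d / Real.Gamma ((d : ℝ) / 2 + 1) / (d + 1) := by
  have hd0 : (0 : ℝ) < d := by exact_mod_cast Nat.pos_of_ne_zero hd
  have h1 : 0 < Real.Gamma ((d : ℝ) / 2) := Real.Gamma_pos_of_pos (by positivity)
  have h2 : 0 < Real.Gamma (((d : ℝ) + 1) / 2) := Real.Gamma_pos_of_pos (by positivity)
  have h3 : 0 < √Real.pi := Real.sqrt_pos.2 Real.pi_pos
  push_cast
  rw [gammaD, Real.Gamma_one_half_eq, Real.Gamma_add_one (by positivity),
    Real.Gamma_add_one (by positivity)]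
  field_simp
  ring

/-- The uniform measure on the sphere is upper `d`-regular with constant `γ_d / d`. -/
lemma uniformSphere_closedBall_le (d : ℕ) (hd : 2 ≤ d) {p : EuclideanSpace ℝ (Fin (d + 1))}
    (hp : p ∈ sphere (0 : EuclideanSpace ℝ (Fin (d + 1))) 1) {t : ℝ} (ht : 0 < t) :
    uniformSphere d (closedBall p t) ≤ ENNReal.ofReal (gammaD d / d * t ^ (d : ℝ)) := by
  have hp1 : ‖p‖ = 1 := by simpa using hp
  have : Nonempty (Fin d) := ⟨⟨0, by omega⟩⟩
  set c : ℝ := max (-1) (1 - t ^ 2 / 2) with hcdef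
  have hc : c ∈ Set.Icc (-1 : ℝ) 1 :=
    ⟨le_max_left _ _, max_le (by norm_num) (by nlinarith)⟩
  have hct : √(2 - 2 * c) ≤ t := by
    refine Real.sqrt_le_iff.2 ⟨ht.le, ?_⟩
    have := le_max_right (-1) (1 - t ^ 2 / 2)
    linarith
  have hsub : ball (0 : EuclideanSpace ℝ (Fin (d + 1))) 1 ∩
      (fun y => ‖y‖⁻¹ • y) ⁻¹' closedBall p t ⊆ {y | ‖y‖ < 1 ∧ c * ‖y‖ ≤ inner ℝ p y} := by
    rintro y ⟨hy1, hy2⟩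
    refine ⟨by simpa using hy1, ?_⟩
    rcases eq_or_ne y 0 with rfl | hy
    · simp
    have hn : 0 < ‖y‖ := norm_pos_iff.2 hy
    rw [hcdef, max_mul_of_nonneg _ _ hn.le]
    refine max_le ?_ ?_
    · have := (abs_le.1 (abs_real_inner_le_norm p y)).1
      rw [hp1] at this
      linarith
    · have h1 : ‖‖y‖⁻¹ • y - p‖ ≤ t := by
        rw [← dist_eq_norm]
        exact hy2
      have h2 : ‖‖y‖⁻¹ • y - p‖ ^ 2 = 2 - 2 * (inner ℝ p y / ‖y‖) := by
        rw [norm_sub_sq_real, norm_smul, hp1, real_inner_smul_left, real_inner_comm, norm_inv,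
          norm_norm, inv_mul_cancel₀ hn.ne']
        ring
      have h3 : ‖‖y‖⁻¹ • y - p‖ ^ 2 ≤ t ^ 2 := by gcongr
      have h4 : 1 - t ^ 2 / 2 ≤ inner ℝ p y / ‖y‖ := by linarith
      exact (le_div_iff₀ hn).1 h4
  have hvol := (measure_mono hsub).trans (volume_cone_inner_le d hd hc hp1)
  rw [uniformSphere, Measure.map_apply (measurable_inv_norm_smul d)
    isClosed_closedBall.measurableSet,
    ProbabilityTheory.cond_apply measurableSet_ball]
  have hG : 0 < Real.Gamma ((d : ℝ) / 2 + 1) := Real.Gamma_pos_of_pos (by positivity)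
  have hG' : 0 < Real.Gamma (((d + 1 : ℕ) : ℝ) / 2 + 1) := Real.Gamma_pos_of_pos (by positivity)
  have hconst := gammaD_div_mul_volume d (by omega)
  rw [EuclideanSpace.volume_ball, Fintype.card_fin, ENNReal.ofReal_one, one_pow, one_mul,
    ← ENNReal.ofReal_mul (by positivity)] at hvol
  rw [EuclideanSpace.volume_ball, Fintype.card_fin, ENNReal.ofReal_one, one_pow, one_mul]
  set v : ℝ := √Real.pi ^ d / Real.Gamma ((d : ℝ) / 2 + 1)
  set w : ℝ := √Real.pi ^ (d + 1) / Real.Gamma (((d + 1 : ℕ) : ℝ) / 2 + 1)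
  have hπ : 0 < √Real.pi := Real.sqrt_pos.2 Real.pi_pos
  have hv : 0 < v := by positivity
  have hw : 0 < w := by positivity
  rw [← ENNReal.ofReal_inv_of_pos hw]
  refine (mul_le_mul_right hvol _).trans ?_
  rw [← ENNReal.ofReal_mul (by positivity)]
  refine ENNReal.ofReal_le_ofReal ?_
  rw [Real.rpow_natCast, inv_mul_le_iff₀ hw]
  calc √(2 - 2 * c) ^ d / (d + 1) * v ≤ t ^ d / (d + 1) * v := by gcongr
    _ = t ^ d * (gammaD d / d * w) := by rw [hconst]; ring
    _ = w * (gammaD d / d * t ^ d) := by ring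


/-- inequality `\eqref{sep-uniform}`: explicit separation bound for
unweighted minimal Riesz `s`-energy configurations on the sphere `𝕊^d`, `s > d`. -/
theorem stmt_15 (d : ℕ) (hd : 2 ≤ d) (s : ℝ) (hs : (d : ℝ) < s)
    (N : ℕ) (hN : 2 ≤ N) (x : Fin N → EuclideanSpace ℝ (Fin (d + 1)))
    (hx : IsEnergyMinimizer s (fun _ _ => (1 : ℝ))
      (sphere (0 : EuclideanSpace ℝ (Fin (d + 1))) 1) x) :
    sepDist x ≥ ((d : ℝ) / gammaD d) ^ (1 / (d : ℝ)) * (1 - (d : ℝ) / s) ^ (1 / (d : ℝ)) *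
      ((d : ℝ) / s) ^ (1 / s) * (N : ℝ) ^ (-(1 / (d : ℝ))) := by
  have hd0 : (0 : ℝ) < d := by exact_mod_cast (by omega : 0 < d)
  have hγ : 0 < gammaD d := by
    have h1 : 0 < Real.Gamma ((d : ℝ) / 2) := Real.Gamma_pos_of_pos (by positivity)
    have h2 : 0 < Real.Gamma (((d : ℝ) + 1) / 2) := Real.Gamma_pos_of_pos (by positivity)
    have h3 : 0 < Real.Gamma (1 / 2) := Real.Gamma_pos_of_pos (by norm_num)
    rw [gammaD]
    positivity
  refine le_csInf ?_ ?_
  · exact ⟨_, ⟨0, by omega⟩, ⟨1, by omega⟩, by simp, rfl⟩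
  · rintro _ ⟨i, j, hij, rfl⟩
    have h := hx.le_dist (uniformSphere d) (ae_uniformSphere_mem_sphere d) hd0 hs
      (div_pos hγ hd0) (fun p hp t ht => uniformSphere_closedBall_le d hd hp ht) hij
    rwa [one_div_div] at h
end
end
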